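/- Let A and U be nonempty sets with the discrete topology, let X ⊆ A^ℤ and Y ⊆ U^ℤ be shift spaces, and let Ψ : X → Y be a bijective extended sliding block code of finite degree. Assume that for every sequence (x^k)_{k≥1} in X with Ψ(x^k) → y in U^ℤ there exist a sequence of A-valued functions (h_ℓ)_{ℓ≥0} on finite subsets of ℤ with h_{ℓ+1} extending h_ℓ, and a decreasing sequence (S_ℓ)_{ℓ≥0} of infinite subsets of ℕ, such that for every ℓ ≥ 0 one has x^k ∈ C_X(h_ℓ) for all k ∈ S_ℓ and Ψ(z)_j = y_j for every z ∈ C_X(h_ℓ) and |j| ≤ ℓ, and moreover the set D = ⋃_{ℓ≥0} dom(h_ℓ) is either a bounded subset of ℤ or equal to all of ℤ. Then the inverse map Ψ⁻¹ : Y → X is continuous and shift-commuting; that is, Ψ is reversible. -/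

import Mathlib

open Filter Topology Set

namespace ShiftPaper

/-- The shift map `σ` on the full shift `A^ℤ`: `σ(x)_n = x_{n+1}`. -/
def shiftMap {A : Type*} (x : ℤ → A) : ℤ → A := fun n => x (n + 1)

/-- The `n`-th iterate of the shift: `σ^n(x)_m = x_{m+n}` (for `n : ℤ`). -/
def shiftIter {A : Type*} (n : ℤ) (x : ℤ → A) : ℤ → A := fun m => x (m + n)

/-- A shift space: a nonempty closed shift-invariant subset of the full shift. -/
def IsShiftSpace {A : Type*} [TopologicalSpace A] (X : Set (ℤ → A)) : Prop :=
  X.Nonempty ∧ IsClosed X ∧ shiftMap '' X = X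

/-- The cylinder in `X` determined by the finite set `s ⊆ ℤ` and the values of `h` on `s`:
`C_X(h) = X ∩ {x : x_i = h_i for all i ∈ s}`. -/
def cylX {A : Type*} (X : Set (ℤ → A)) (s : Finset ℤ) (h : ℤ → A) : Set (ℤ → A) :=
  X ∩ {x | ∀ i ∈ s, x i = h i}

/-- A barrier on `X`: a partition of `X` all of whose members are nonempty cylinders in `X`. -/
def IsBarrier {A : Type*} (X : Set (ℤ → A)) (B : Set (Set (ℤ → A))) : Prop :=
  (∀ C ∈ B, C.Nonempty ∧ ∃ (s : Finset ℤ) (h : ℤ → A), C = cylX X s h) ∧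
  (∀ x ∈ X, ∃! C, C ∈ B ∧ x ∈ C)

/-- `Ψ` is induced by the local rule `φ` on the barrier `B`:
`Ψ(x)_n = φ(C)` whenever `C ∈ B` contains `σ^n(x)`. -/
def InducedBy {A U : Type*} (X : Set (ℤ → A)) (Ψ : (ℤ → A) → ℤ → U)
    (B : Set (Set (ℤ → A))) (φ : Set (ℤ → A) → U) : Prop :=
  ∀ x ∈ X, ∀ n : ℤ, ∀ C ∈ B, shiftIter n x ∈ C → Ψ x n = φ C

/-- `Ψ` is an extended sliding block code on `X`. -/
def IsESBC {A U : Type*} (X : Set (ℤ → A)) (Ψ : (ℤ → A) → ℤ → U) : Prop :=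
  ∃ (B : Set (Set (ℤ → A))) (φ : Set (ℤ → A) → U), IsBarrier X B ∧ InducedBy X Ψ B φ

/-- `Ψ` is an extended sliding block code of finite degree: it is induced by a local rule `φ`
on a barrier `B` (so `B` is attached to `Ψ`) such that for each symbol `u` only finitely many
members of `B` have `φ`-value (i.e. `Ψ₀`-value) `u`. -/
def IsFiniteDegreeESBC {A U : Type*} (X : Set (ℤ → A)) (Ψ : (ℤ → A) → ℤ → U) : Prop :=
  ∃ (B : Set (Set (ℤ → A))) (φ : Set (ℤ → A) → U), IsBarrier X B ∧ InducedBy X Ψ B φ ∧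
    ∀ u : U, {C | C ∈ B ∧ φ C = u}.Finite

/-- The data produced by the crucial lemma for a distinguished sequence `x` with
`Ψ(x^k) → y`: a sequence of partial functions `h_ℓ` (with finite domains `s_ℓ`, each
extending the previous one) and a decreasing sequence `S_ℓ` of infinite subsets of `ℕ`,
such that `x^k ∈ C_X(h_ℓ)` for `k ∈ S_ℓ` and `Ψ(z)|_{[-ℓ,ℓ]} = y|_{[-ℓ,ℓ]}` on `C_X(h_ℓ)`. -/
def AssocData {A U : Type*} (X : Set (ℤ → A)) (Ψ : (ℤ → A) → ℤ → U)
    (x : ℕ → ℤ → A) (y : ℤ → U)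
    (s : ℕ → Finset ℤ) (h : ℕ → ℤ → A) (S : ℕ → Set ℕ) : Prop :=
  (∀ ℓ : ℕ, s ℓ ⊆ s (ℓ + 1)) ∧
  (∀ ℓ : ℕ, ∀ i ∈ s ℓ, h (ℓ + 1) i = h ℓ i) ∧
  (∀ ℓ : ℕ, (S ℓ).Infinite) ∧
  (∀ ℓ : ℕ, S (ℓ + 1) ⊆ S ℓ) ∧
  (∀ ℓ : ℕ, ∀ k ∈ S ℓ, x k ∈ cylX X (s ℓ) (h ℓ)) ∧
  (∀ ℓ : ℕ, ∀ z ∈ cylX X (s ℓ) (h ℓ), ∀ j : ℤ, |j| ≤ (ℓ : ℤ) → Ψ z j = y j)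

/-- The symbol `a` belongs to `L₁(X)`: it appears in some point of `X`. -/
def inLetter {A : Type*} (X : Set (ℤ → A)) (a : A) : Prop :=
  ∃ x ∈ X, ∃ i : ℤ, x i = a

/-- The two-letter word `ab` belongs to the language `L(X)`. -/
def inLang2 {A : Type*} (X : Set (ℤ → A)) (a b : A) : Prop :=
  ∃ x ∈ X, ∃ i : ℤ, x i = a ∧ x (i + 1) = b

/-- `X` is right-finite: for each allowed symbol `a`, only finitely many `b` with `ab ∈ L(X)`. -/
def RightFinite {A : Type*} (X : Set (ℤ → A)) : Prop :=
  ∀ a : A, inLetter X a → {b : A | inLang2 X a b}.Finite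

/-- `X` is left-finite: for each allowed symbol `a`, only finitely many `b` with `ba ∈ L(X)`. -/
def LeftFinite {A : Type*} (X : Set (ℤ → A)) : Prop :=
  ∀ a : A, inLetter X a → {b : A | inLang2 X b a}.Finite

end ShiftPaper

open ShiftPaper

/-!
Let `Ψ w` be the limit of `Ψ (x k)`. Any point of `X` lying in all the cylinders `C_X(h_ℓ)` is a
preimage of `Ψ w`, hence equals `w` by injectivity. If `D` is finite, the cylinders stabilise, so
some `x k` lies in all of them. If `D = ℤ`, points chosen along the sets `S_ℓ` have eventually
constant coordinates, and their limit lies in all the cylinders since these are closed. Either way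
`w` is a limit of terms of the sequence `x`, which is enough for sequential continuity of the
inverse. Shift equivariance of the inverse is inherited from `Ψ`.
-/

namespace ShiftPaper

section LeftInverse

variable {α β : Type*} {f : α → β} {g : β → α} {s : Set α}

theorem leftInvOn_semiconj {a : α → α} {b : β → β} (hg : LeftInvOn g f s) (ha : MapsTo a s s)
    (hf : ∀ x ∈ s, f (a x) = b (f x)) {y : β} (hy : y ∈ f '' s) : g (b y) = a (g y) := by
  obtain ⟨x, hx, rfl⟩ := hy
  rw [← hf x hx, hg (ha hx), hg hx]

/- No `Tendsto k atTop atTop` is needed: the subsequence criterion ranges over all sequences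
tending to the limit, so it suffices that each has some terms approaching the value. -/
theorem continuousOn_of_leftInvOn_of_seq [TopologicalSpace α] [TopologicalSpace β]
    [FirstCountableTopology β] (hg : LeftInvOn g f s)
    (hseq : ∀ x : ℕ → α, (∀ n, x n ∈ s) → ∀ w ∈ s,
      Tendsto (fun n => f (x n)) atTop (𝓝 (f w)) →
      ∃ k : ℕ → ℕ, Tendsto (fun n => x (k n)) atTop (𝓝 w)) :
    ContinuousOn g (f '' s) := by
  rw [continuousOn_iff_continuous_domRestrict, continuous_iff_continuousAt]
  rintro ⟨_, w, hw, rfl⟩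
  refine tendsto_of_subseq_tendsto fun y hy => ?_
  choose x hxs hxy using fun n => (y n).2
  have hlim : Tendsto (fun n => f (x n)) atTop (𝓝 (f w)) := by
    simpa only [hxy, Function.comp_def] using (continuous_subtype_val.tendsto _).comp hy
  obtain ⟨k, hk⟩ := hseq x hxs w hw hlim
  refine ⟨k, ?_⟩
  simpa only [domRestrict_apply, ← hxy, hg (hxs _), hg hw] using hk

end LeftInverse

section Shift

variable {A U : Type*} {X : Set (ℤ → A)} {Ψ : (ℤ → A) → ℤ → U}

theorem shiftIter_zero (x : ℤ → A) : shiftIter 0 x = x :=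
  funext fun m => congrArg x (add_zero m)

theorem shiftMap_shiftIter (n : ℤ) (x : ℤ → A) : shiftMap (shiftIter n x) = shiftIter (n + 1) x :=
  funext fun m => congrArg x (by ring)

theorem shiftIter_shiftMap (n : ℤ) (x : ℤ → A) : shiftIter n (shiftMap x) = shiftIter (n + 1) x :=
  funext fun m => congrArg x (by ring)

theorem shiftMap_injective : Function.Injective (shiftMap : (ℤ → A) → ℤ → A) := fun x y hxy =>
  funext fun n => by simpa only [shiftMap, sub_add_cancel] using congrFun hxy (n - 1)

theorem shiftMap_mem_iff (hX : shiftMap '' X = X) {x : ℤ → A} : shiftMap x ∈ X ↔ x ∈ X := by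
  simpa only [hX] using shiftMap_injective.mem_set_image (s := X) (a := x)

theorem shiftIter_mem (hX : shiftMap '' X = X) {x : ℤ → A} (hx : x ∈ X) (n : ℤ) :
    shiftIter n x ∈ X := by
  induction n using Int.induction_on with
  | zero => rwa [shiftIter_zero]
  | succ i ih => rwa [← shiftMap_shiftIter, shiftMap_mem_iff hX]
  | pred i ih => rwa [← shiftMap_mem_iff hX, shiftMap_shiftIter, sub_add_cancel]

theorem IsESBC.map_shiftMap (hΨ : IsESBC X Ψ) (hX : shiftMap '' X = X) {x : ℤ → A} (hx : x ∈ X) :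
    Ψ (shiftMap x) = shiftMap (Ψ x) := by
  obtain ⟨B, φ, ⟨-, hB⟩, hφ⟩ := hΨ
  funext n
  obtain ⟨C, ⟨hC, hxC⟩, -⟩ := hB _ (shiftIter_mem hX hx (n + 1))
  have hleft : Ψ (shiftMap x) n = φ C :=
    hφ _ ((shiftMap_mem_iff hX).2 hx) n C hC (by rwa [shiftIter_shiftMap])
  have hright : Ψ x (n + 1) = φ C := hφ x hx (n + 1) C hC hxC
  exact hleft.trans hright.symm

theorem IsFiniteDegreeESBC.isESBC (hΨ : IsFiniteDegreeESBC X Ψ) : IsESBC X Ψ :=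
  let ⟨B, φ, hB, hφ, _⟩ := hΨ
  ⟨B, φ, hB, hφ⟩

end Shift

theorem isClosed_cylX {A : Type*} [TopologicalSpace A] [T1Space A] {X : Set (ℤ → A)}
    (hX : IsClosed X) (s : Finset ℤ) (h : ℤ → A) : IsClosed (cylX X s h) := by
  have hpi : IsClosed ((s : Set ℤ).pi fun i => {h i}) :=
    isClosed_set_pi fun _ _ => isClosed_singleton
  exact hX.inter hpi

namespace AssocData

variable {A U : Type*} {X : Set (ℤ → A)} {Ψ : (ℤ → A) → ℤ → U} {x : ℕ → ℤ → A} {y : ℤ → U}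
  {s : ℕ → Finset ℤ} {h : ℕ → ℤ → A} {S : ℕ → Set ℕ}

theorem monotone_domain (hd : AssocData X Ψ x y s h S) : Monotone s :=
  monotone_nat_of_le_succ hd.1

theorem apply_eq_of_le (hd : AssocData X Ψ x y s h S) {ℓ m : ℕ} (hℓm : ℓ ≤ m) {i : ℤ}
    (hi : i ∈ s ℓ) : h m i = h ℓ i := by
  induction m, hℓm using Nat.le_induction with
  | base => rfl
  | succ m hℓm ih => exact (hd.2.1 m i (hd.monotone_domain hℓm hi)).trans ih

theorem antitone_cylX (hd : AssocData X Ψ x y s h S) : Antitone fun ℓ => cylX X (s ℓ) (h ℓ) :=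
  fun _ _ hℓm _ hz =>
    ⟨hz.1, fun i hi => (hz.2 i (hd.monotone_domain hℓm hi)).trans (hd.apply_eq_of_le hℓm hi)⟩

theorem map_eq_of_forall_mem (hd : AssocData X Ψ x y s h S) {z : ℤ → A}
    (hz : ∀ ℓ, z ∈ cylX X (s ℓ) (h ℓ)) : Ψ z = y := by
  obtain ⟨-, -, -, -, -, hΨ⟩ := hd
  exact funext fun j => hΨ j.natAbs z (hz _) j (Int.abs_eq_natAbs j).le

theorem exists_forall_mem_of_finite (hd : AssocData X Ψ x y s h S)
    (hD : (⋃ ℓ, (s ℓ : Set ℤ)).Finite) : ∃ n, ∀ ℓ, x n ∈ cylX X (s ℓ) (h ℓ) := by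
  have hdir : Directed (· ⊆ ·) fun ℓ => (s ℓ : Set ℤ) :=
    Monotone.directed_le fun _ _ hℓm => Finset.coe_subset.2 (hd.monotone_domain hℓm)
  obtain ⟨L, hL⟩ : ∃ L, ⋃ ℓ, (s ℓ : Set ℤ) ⊆ s L := by
    simpa only [hD.coe_toFinset] using
      hdir.exists_mem_subset_of_finset_subset_biUnion hD.coe_toFinset.subset
  have ⟨_, _, hS, _, hmem, _⟩ := hd
  obtain ⟨n, hn⟩ := (hS L).nonempty
  refine ⟨n, fun ℓ => ?_⟩
  obtain hℓL | hLℓ := le_total ℓ L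
  · exact hd.antitone_cylX hℓL (hmem L n hn)
  · refine ⟨(hmem L n hn).1, fun i hi => ?_⟩
    have hiL : i ∈ s L := hL (mem_iUnion_of_mem ℓ hi)
    rw [hd.apply_eq_of_le hLℓ hiL, (hmem L n hn).2 i hiL]

theorem exists_tendsto_of_iUnion_eq_univ [TopologicalSpace A] [T1Space A]
    (hd : AssocData X Ψ x y s h S) (hX : IsClosed X) (hD : ⋃ ℓ, (s ℓ : Set ℤ) = univ) :
    ∃ (k : ℕ → ℕ) (z : ℤ → A),
      (∀ ℓ, z ∈ cylX X (s ℓ) (h ℓ)) ∧ Tendsto (fun n => x (k n)) atTop (𝓝 z) := by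
  have ⟨_, _, hS, _, hmem, _⟩ := hd
  choose k hk using fun ℓ => (hS ℓ).nonempty
  choose m hm using iUnion_eq_univ_iff.1 hD
  have hev (ℓ : ℕ) : ∀ᶠ n in atTop, x (k n) ∈ cylX X (s ℓ) (h ℓ) := by
    filter_upwards [eventually_ge_atTop ℓ] with n hn
    exact hd.antitone_cylX hn (hmem n _ (hk n))
  have hlim : Tendsto (fun n => x (k n)) atTop (𝓝 fun i => h (m i) i) :=
    tendsto_pi_nhds.2 fun i =>
      tendsto_nhds_of_eventually_eq ((hev (m i)).mono fun n hn => hn.2 i (hm i))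
  exact ⟨k, _, fun ℓ => (isClosed_cylX hX _ _).mem_of_tendsto hlim (hev ℓ), hlim⟩

theorem exists_tendsto_preimage [TopologicalSpace A] [T1Space A] (hd : AssocData X Ψ x y s h S)
    (hX : IsClosed X)
    (hD : (⋃ ℓ, (s ℓ : Set ℤ)).Finite ∨ ⋃ ℓ, (s ℓ : Set ℤ) = univ) :
    ∃ (k : ℕ → ℕ) (z : ℤ → A), z ∈ X ∧ Ψ z = y ∧ Tendsto (fun n => x (k n)) atTop (𝓝 z) := by
  obtain ⟨k, z, hz, hlim⟩ : ∃ (k : ℕ → ℕ) (z : ℤ → A),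
      (∀ ℓ, z ∈ cylX X (s ℓ) (h ℓ)) ∧ Tendsto (fun n => x (k n)) atTop (𝓝 z) := by
    obtain hfin | huniv := hD
    · obtain ⟨n, hn⟩ := hd.exists_forall_mem_of_finite hfin
      exact ⟨fun _ => n, x n, hn, tendsto_const_nhds⟩
    · exact hd.exists_tendsto_of_iUnion_eq_univ hX huniv
  exact ⟨k, z, (hz 0).1, hd.map_eq_of_forall_mem hz, hlim⟩

end AssocData

end ShiftPaper

theorem reversible_C1_C2_general
    {A U : Type*} [TopologicalSpace A] [T1Space A] [TopologicalSpace U] [FirstCountableTopology U]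
    {X : Set (ℤ → A)} (hX : IsShiftSpace X) {Y : Set (ℤ → U)}
    {Ψ : (ℤ → A) → ℤ → U} (hΨ : IsESBC X Ψ) (hbij : BijOn Ψ X Y)
    (hyp : ∀ (x : ℕ → ℤ → A) (y : ℤ → U), (∀ k, x k ∈ X) → y ∈ Y →
      Tendsto (fun k => Ψ (x k)) atTop (𝓝 y) →
      ∃ (s : ℕ → Finset ℤ) (h : ℕ → ℤ → A) (S : ℕ → Set ℕ),
        AssocData X Ψ x y s h S ∧
        ((BddAbove (⋃ ℓ, (s ℓ : Set ℤ)) ∧ BddBelow (⋃ ℓ, (s ℓ : Set ℤ))) ∨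
          (⋃ ℓ, (s ℓ : Set ℤ)) = Set.univ)) :
    ∃ Φ : (ℤ → U) → ℤ → A,
      (∀ x ∈ X, Φ (Ψ x) = x) ∧
      (∀ y ∈ Y, Φ y ∈ X ∧ Ψ (Φ y) = y) ∧
      ContinuousOn Φ Y ∧
      (∀ y ∈ Y, Φ (shiftMap y) = shiftMap (Φ y)) := by
  obtain ⟨⟨x₀, -⟩, hclosed, hshift⟩ := hX
  have : Nonempty (ℤ → A) := ⟨x₀⟩
  have hinv : InvOn (Function.invFunOn Ψ X) Ψ X Y := hbij.invOn_invFunOn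
  refine ⟨Function.invFunOn Ψ X, fun x hx => hinv.1 hx,
    fun y hy => ⟨hbij.surjOn.mapsTo_invFunOn hy, hinv.2 hy⟩, ?_, fun y hy => ?_⟩
  · rw [← hbij.image_eq]
    refine continuousOn_of_leftInvOn_of_seq hinv.1 fun x hx w hw hlim => ?_
    obtain ⟨s, h, S, hd, hD⟩ := hyp x (Ψ w) hx (hbij.mapsTo hw) hlim
    obtain ⟨k, z, hz, hΨz, hk⟩ :=
      hd.exists_tendsto_preimage hclosed (hD.imp_left fun ⟨ha, hb⟩ => hb.finite_of_bddAbove ha)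
    obtain rfl : z = w := hbij.injOn hz hw hΨz
    exact ⟨k, hk⟩
  · exact leftInvOn_semiconj hinv.1 (fun x hx => (shiftMap_mem_iff hshift).2 hx)
      (fun x hx => hΨ.map_shiftMap hshift hx) (hbij.image_eq ▸ hy)

/-- a bijective finite degree ESBC `Ψ : X → Y` such that every distinguished
sequence admits associated data whose total domain `D` is bounded (class C1) or all of `ℤ`
(class C2) is reversible: its inverse is continuous and shift-commuting. -/
theorem reversible_C1_C2
    {A U : Type*} [TopologicalSpace A] [DiscreteTopology A] [Nonempty A]
    [TopologicalSpace U] [DiscreteTopology U] [Nonempty U]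
    (X : Set (ℤ → A)) (hX : IsShiftSpace X)
    (Y : Set (ℤ → U)) (hY : IsShiftSpace Y)
    (Ψ : (ℤ → A) → ℤ → U) (hΨ : IsFiniteDegreeESBC X Ψ)
    (hinj : Set.InjOn Ψ X) (hsurj : Ψ '' X = Y)
    (hyp : ∀ (x : ℕ → ℤ → A) (y : ℤ → U), (∀ k, x k ∈ X) →
      Tendsto (fun k => Ψ (x k)) atTop (𝓝 y) →
      ∃ (s : ℕ → Finset ℤ) (h : ℕ → ℤ → A) (S : ℕ → Set ℕ),
        AssocData X Ψ x y s h S ∧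
        ((BddAbove (⋃ ℓ, (s ℓ : Set ℤ)) ∧ BddBelow (⋃ ℓ, (s ℓ : Set ℤ))) ∨
          (⋃ ℓ, (s ℓ : Set ℤ)) = Set.univ)) :
    ∃ Φ : (ℤ → U) → ℤ → A,
      (∀ x ∈ X, Φ (Ψ x) = x) ∧
      (∀ y ∈ Y, Φ y ∈ X ∧ Ψ (Φ y) = y) ∧
      ContinuousOn Φ Y ∧
      (∀ y ∈ Y, Φ (shiftMap y) = shiftMap (Φ y)) := by
  exact reversible_C1_C2_general hX hΨ.isESBC ⟨hsurj ▸ mapsTo_image Ψ X, hinj, hsurj.ge⟩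
    fun x y hx _ => hyp x y hx
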